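/- Let α ∈ ℝ^{d+1} and β ∈ ℝ^d be strictly increasing, and suppose (M,N) ∈ ℝ²_{>0} is an appropriate choice for (α,β), meaning that for all (π,τ), the coefficients M α_i + N(β_{τ(i-1)} − β_{τ(i)}) are strictly increasing in i (with β_{τ(0)}=β_{τ(d+1)}=0). Let w ∈ ℝ^{d+1} satisfy: (1) w_{π^{-1}(1)} < ... < w_{π^{-1}(d+1)}, and (2) the differences u_{τ^{-1}(j)+1} − u_{τ^{-1}(j)} (where u_i = w_{π^{-1}(i)}) are strictly increasing in j. Then ⟨w, v_{π,τ}⟩ > ⟨w, v_{π',τ'}⟩ for all (π',τ') ≠ (π,τ). In particular, each v_{π,τ} is a vertex of the nested permutohedron Perm(α,β;M,N) = conv{v_{σ,ρ} : (σ,ρ) ∈ S_{d+1}×S_d}. -/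

import Mathlib

/-- The standard basis vector `e_j` of `ℝ^{d+1}`. -/
noncomputable def stdVec (d : ℕ) (j : Fin (d+1)) : Fin (d+1) → ℝ :=
  fun x => if x = j then 1 else 0

/-- `betaExt d β τ m` is `β_{τ(m)}` (1-indexed) for `1 ≤ m ≤ d`, with the convention
`β_{τ(0)} = β_{τ(d+1)} = 0`. -/
noncomputable def betaExt (d : ℕ) (β : Fin d → ℝ) (τ : Equiv.Perm (Fin d)) (m : ℕ) : ℝ :=
  if h : 1 ≤ m ∧ m ≤ d then β (τ ⟨m - 1, by omega⟩) else 0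

/-- The candidate vertex `v_{π,τ}` of the nested permutohedron `Perm(α,β;M,N)`. -/
noncomputable def nestedVertex (d : ℕ) (α : Fin (d+1) → ℝ) (β : Fin d → ℝ) (M N : ℝ)
    (π : Equiv.Perm (Fin (d+1))) (τ : Equiv.Perm (Fin d)) : Fin (d+1) → ℝ :=
  M • (∑ i, α i • stdVec d (π⁻¹ i)) +
    N • (∑ j : Fin d, β j •
      (stdVec d (π⁻¹ (Fin.succ (τ⁻¹ j))) - stdVec d (π⁻¹ (Fin.castSucc (τ⁻¹ j)))))

theorem aux_rearr {n : ℕ} (f g : Fin n → ℝ) (hf : StrictMono f) (hg : StrictMono g)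
    (σ : Equiv.Perm (Fin n)) (hσ : σ ≠ 1) :
    ∑ i, f i * g (σ i) < ∑ i, f i * g i := by
  have hfg : Monovary f g := hf.monotone.monovary hg.monotone
  rw [hfg.sum_mul_comp_perm_lt_sum_mul_iff]
  intro h
  apply hσ
  have hmono : StrictMono σ := by
    apply Monotone.strictMono_of_injective _ σ.injective
    intro i j hij
    by_contra hlt
    push Not at hlt
    have h1 := h (hg hlt : (g ∘ σ) j < (g ∘ σ) i)
    have h2 := hf.le_iff_le.1 h1
    have : i = j := le_antisymm hij h2
    subst this
    exact lt_irrefl _ hlt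
  have hr : Set.range σ = Set.range (id : Fin n → Fin n) := by
    rw [σ.surjective.range_eq, Set.range_id]
  have := (StrictMono.range_inj hmono strictMono_id).1 hr
  ext i
  simp [this]

theorem aux_stdVec (d : ℕ) (w : Fin (d+1) → ℝ) (j : Fin (d+1)) :
    ∑ x, w x * stdVec d j x = w j := by
  simp [stdVec]

theorem aux_expand (d : ℕ) (α : Fin (d+1) → ℝ) (β : Fin d → ℝ) (M N : ℝ)
    (π : Equiv.Perm (Fin (d+1))) (τ : Equiv.Perm (Fin d)) (w : Fin (d+1) → ℝ) :
    ∑ x, w x * nestedVertex d α β M N π τ x =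
      M * (∑ i, α i * w (π⁻¹ i)) + N * ∑ j : Fin d, β j *
        (w (π⁻¹ (Fin.succ (τ⁻¹ j))) - w (π⁻¹ (Fin.castSucc (τ⁻¹ j)))) := by
  have h : ∀ v : Fin (d+1) → ℝ, ∑ x, w x * v x = w ⬝ᵥ v := fun _ => rfl
  have h2 : ∀ j, w ⬝ᵥ stdVec d j = w j := aux_stdVec d w
  rw [h]
  simp only [nestedVertex, dotProduct_add, dotProduct_smul, dotProduct_sum, dotProduct_sub, h2,
    smul_eq_mul]

theorem aux_coef (d : ℕ) (β : Fin d → ℝ) (τ : Equiv.Perm (Fin d)) (u : Fin (d+1) → ℝ) :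
    ∑ j : Fin d, β j * (u (Fin.succ (τ⁻¹ j)) - u (Fin.castSucc (τ⁻¹ j))) =
    ∑ i : Fin (d+1), (betaExt d β τ (i : ℕ) - betaExt d β τ ((i : ℕ) + 1)) * u i := by
  rw [← Equiv.sum_comp τ]
  simp only [Equiv.Perm.coe_inv, Equiv.symm_apply_apply, mul_sub, sub_mul, Finset.sum_sub_distrib]
  congr 1
  · rw [Fin.sum_univ_succ]
    simp [betaExt]
  · rw [Fin.sum_univ_castSucc]
    simp [betaExt]

theorem aux_expand2 (d : ℕ) (α : Fin (d+1) → ℝ) (β : Fin d → ℝ) (M N : ℝ)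
    (π : Equiv.Perm (Fin (d+1))) (τ : Equiv.Perm (Fin d)) (w : Fin (d+1) → ℝ) :
    ∑ x, w x * nestedVertex d α β M N π τ x =
      ∑ i : Fin (d+1), (M * α i +
        N * (betaExt d β τ (i : ℕ) - betaExt d β τ ((i : ℕ) + 1))) * w (π⁻¹ i) := by
  rw [aux_expand, aux_coef d β τ (fun i => w (π⁻¹ i)), Finset.mul_sum, Finset.mul_sum,
    ← Finset.sum_add_distrib]
  exact Finset.sum_congr rfl fun i _ => by ring

/-- Proposition `prop:fanofusual2` (key step): if `(M,N)` is an appropriate choice for the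
strictly increasing pair `(α,β)`, and `w` lies in the open cone `C(π,τ)` — i.e. the
coordinates `w_{π⁻¹(1)} < ⋯ < w_{π⁻¹(d+1)}` increase and their first differences, read in the
order prescribed by `τ`, increase — then `⟨w, v_{π,τ}⟩ > ⟨w, v_{π',τ'}⟩` for every
`(π',τ') ≠ (π,τ)`; in particular `v_{π,τ}` is a vertex of
`Perm(α,β;M,N) = conv{v_{σ,ρ}}`, not lying in the convex hull of the other points. -/
theorem nestedVertex_strict_max (d : ℕ) (α : Fin (d+1) → ℝ) (β : Fin d → ℝ) (M N : ℝ)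
    (hα : StrictMono α) (hβ : StrictMono β) (hM : 0 < M) (hN : 0 < N)
    (happ : ∀ τ : Equiv.Perm (Fin d), StrictMono fun i : Fin (d+1) =>
      M * α i + N * (betaExt d β τ (i : ℕ) - betaExt d β τ ((i : ℕ) + 1)))
    (π : Equiv.Perm (Fin (d+1))) (τ : Equiv.Perm (Fin d)) (w : Fin (d+1) → ℝ)
    (hw1 : StrictMono fun i => w (π⁻¹ i))
    (hw2 : StrictMono fun j : Fin d =>
      w (π⁻¹ (Fin.succ (τ⁻¹ j))) - w (π⁻¹ (Fin.castSucc (τ⁻¹ j)))) :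
    (∀ p : Equiv.Perm (Fin (d+1)) × Equiv.Perm (Fin d), p ≠ (π, τ) →
      (∑ x, w x * nestedVertex d α β M N p.1 p.2 x)
        < ∑ x, w x * nestedVertex d α β M N π τ x) ∧
    nestedVertex d α β M N π τ ∉ convexHull ℝ
      {y : Fin (d+1) → ℝ | ∃ p : Equiv.Perm (Fin (d+1)) × Equiv.Perm (Fin d),
        p ≠ (π, τ) ∧ y = nestedVertex d α β M N p.1 p.2} := by
  have main : ∀ p : Equiv.Perm (Fin (d+1)) × Equiv.Perm (Fin d), p ≠ (π, τ) →
      (∑ x, w x * nestedVertex d α β M N p.1 p.2 x)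
        < ∑ x, w x * nestedVertex d α β M N π τ x := by
    rintro ⟨σ, ρ⟩ hp
    have h1 : σ ≠ π → (∑ x, w x * nestedVertex d α β M N σ ρ x)
        < ∑ x, w x * nestedVertex d α β M N π ρ x := by
      intro h
      rw [aux_expand2, aux_expand2]
      have := aux_rearr _ _ (happ ρ) hw1 (π * σ⁻¹)
        (fun hh => h (mul_inv_eq_one.1 hh).symm)
      simpa using this
    have h2 : ρ ≠ τ → (∑ x, w x * nestedVertex d α β M N π ρ x)
        < ∑ x, w x * nestedVertex d α β M N π τ x := by
      intro h
      rw [aux_expand, aux_expand]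
      have := aux_rearr _ _ hβ hw2 (τ * ρ⁻¹)
        (fun hh => h (mul_inv_eq_one.1 hh).symm)
      have h3 := mul_lt_mul_of_pos_left this hN
      simp only [Equiv.Perm.mul_apply, Equiv.Perm.coe_inv, Equiv.symm_apply_apply] at h3
      exact add_lt_add_right h3 _
    by_cases hσ : σ = π
    · subst hσ
      exact h2 fun h => hp (by rw [h])
    · by_cases hρ : ρ = τ
      · subst hρ
        exact h1 hσ
      · exact (h1 hσ).trans (h2 hρ)
  refine ⟨main, fun hmem => ?_⟩
  have hconv : Convex ℝ {y : Fin (d+1) → ℝ |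
      w ⬝ᵥ y < ∑ x, w x * nestedVertex d α β M N π τ x} :=
    convex_halfSpace_lt ⟨fun a b => dotProduct_add w a b, fun c a => dotProduct_smul c w a⟩ _
  have hsub := convexHull_min (fun y hy => by
    obtain ⟨p, hp, rfl⟩ := hy
    exact main p hp) hconv hmem
  exact lt_irrefl (∑ x, w x * nestedVertex d α β M N π τ x) hsub
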